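/- Every maximal C¹ solution (x,v) of the repulsive Kepler ODE with x(t₀) ≠ 0 at some time t₀ is defined for all t ∈ ℝ, and along it one has the uniform bounds |x(t)| ≥ q/H and |v(t)| ≤ √H for all t, where H = |v(t₀)|² + q/|x(t₀)| is the conserved energy. -/

import Mathlib

/-!
The energy `|v|² + q/|x|` is constant along a solution and both of its summands are nonnegative,
which gives the two bounds. In phase space they say that the orbit stays in a closed set avoiding
the singularity `x = 0`, on which the vector field is bounded.

A maximal integral curve with these properties is global. It is Lipschitz, so it has a limit at
each endpoint of its interval, and it solves the equation there because its derivative converges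
too. At an endpoint the local solution given by Picard–Lindelöf can therefore be glued to it,
contradicting maximality; so its interval has no endpoints.
-/

open scoped RealInnerProductSpace

noncomputable section

/-- Euclidean three-space. -/
abbrev R3 : Type := EuclideanSpace ℝ (Fin 3)

open Set Filter Topology Metric
open scoped NNReal

lemma frontier_inter_ball_subset_singleton {I : Set ℝ} (hI : Convex ℝ I) {t₀ b : ℝ}
    (ht₀ : t₀ ∈ interior I) (hb : b ∈ frontier I) :
    frontier I ∩ ball b (dist t₀ b) ⊆ {b} := by
  rintro s ⟨hs, hsb⟩
  by_contra hne
  have not_between : ∀ {r r'}, r ∈ frontier I → r' ∈ frontier I → r ∉ openSegment ℝ t₀ r' :=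
    fun hr hr' h => hr.2 (hI.openSegment_interior_closure_subset_interior ht₀ hr'.1 h)
  have hs_between := not_between hs hb
  have hb_between := not_between hb hs
  have hbt₀ : t₀ ≠ b := dist_pos.1 (dist_nonneg.trans_lt hsb)
  have hst₀ : t₀ ≠ s := by
    rintro rfl
    exact hs.2 ht₀
  rw [openSegment_eq_Ioo' hbt₀, mem_Ioo, min_lt_iff, lt_max_iff] at hs_between
  rw [openSegment_eq_Ioo' hst₀, mem_Ioo, min_lt_iff, lt_max_iff] at hb_between
  rw [mem_ball, Real.dist_eq, Real.dist_eq] at hsb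
  -- `s` and `b` lie on the same side of `t₀`, so one of them separates `t₀` from the other.
  grind

lemma exists_tendsto_of_uniformContinuousOn {X Y : Type*} [UniformSpace X] [UniformSpace Y]
    [CompleteSpace Y] {f : X → Y} {s : Set X} (hf : UniformContinuousOn f s) {a : X}
    (ha : a ∈ closure s) : ∃ y, Tendsto f (𝓝[s] a) (𝓝 y) :=
  haveI : (𝓝[s] a).NeBot := mem_closure_iff_nhdsWithin_neBot.1 ha
  CompleteSpace.complete ((cauchy_nhds.mono nhdsWithin_le_nhds).map_of_le hf inf_le_right)

section IntegralCurve

variable {E : Type*} [NormedAddCommGroup E] [NormedSpace ℝ E]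

lemma hasDerivWithinAt_closure_of_tendsto {f f' : ℝ → E} {e : E} {I : Set ℝ} (hIo : IsOpen I)
    (hIc : Convex ℝ I) (hf : ContinuousOn f (closure I)) (hf' : ∀ s ∈ I, HasDerivAt f (f' s) s)
    {t : ℝ} (hlim : Tendsto f' (𝓝[I] t) (𝓝 e)) : HasDerivWithinAt f e (closure I) t := by
  rw [hasDerivWithinAt_iff_hasFDerivWithinAt]
  refine hasFDerivWithinAt_closure_of_tendsto_fderiv
    (fun s hs => (hf' s hs).differentiableAt.differentiableWithinAt) hIc hIo
    (fun s hs => (hf s hs).mono subset_closure) ?_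
  have hspan : Continuous (ContinuousLinearMap.toSpanSingleton ℝ : E → ℝ →L[ℝ] E) :=
    ContinuousLinearMap.toSpanSingletonCLE.continuous
  refine ((hspan.tendsto e).comp hlim).congr' ?_
  filter_upwards [self_mem_nhdsWithin] with s hs using (hf' s hs).hasFDerivAt.fderiv.symm

lemma isIntegralCurveOn_extendFrom_closure {γ : ℝ → E} {v : ℝ → E → E} {I : Set ℝ}
    (hIo : IsOpen I) (hIc : Convex ℝ I) (hγ : IsIntegralCurveOn γ v I)
    (hlim : ∀ t ∈ closure I, ∃ p, Tendsto γ (𝓝[I] t) (𝓝 p))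
    (hv : ∀ t ∈ closure I, ContinuousAt v.uncurry (t, extendFrom I γ t)) :
    IsIntegralCurveOn (extendFrom I γ) v (closure I) := by
  intro t ht
  have heq : EqOn (extendFrom I γ) γ I := extendFrom_extends hγ.continuousOn
  refine hasDerivWithinAt_closure_of_tendsto (f' := fun s => v s (γ s)) hIo hIc
    (continuousOn_extendFrom subset_rfl hlim) (fun s hs => ?_) ?_
  · exact ((hγ s hs).congr heq (heq hs)).hasDerivAt (hIo.mem_nhds hs)
  · exact (hv t ht).tendsto.comp
      ((tendsto_id.mono_left nhdsWithin_le_nhds).prodMk_nhds (tendsto_extendFrom (hlim t ht)))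

open scoped Classical in
lemma isIntegralCurveOn_piecewise {γ β : ℝ → E} {v : ℝ → E → E} {C T : Set ℝ}
    (hC : IsClosed C) (hT : IsOpen T) (hγ : IsIntegralCurveOn γ v C)
    (hβ : IsIntegralCurveOn β v T) (heq : EqOn γ β (frontier C ∩ T)) :
    IsIntegralCurveOn (C.piecewise γ β) v (interior C ∪ T) := by
  intro t ht
  set η := C.piecewise γ β
  have hηγ : EqOn η γ C := piecewise_eqOn C γ β
  have hηβ : EqOn η β Cᶜ := piecewise_eqOn_compl C γ β
  have hderiv_C : HasDerivWithinAt η (v t (η t)) C t := by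
    by_cases htC : t ∈ C
    · rw [hηγ htC]
      exact (hγ t htC).congr hηγ (hηγ htC)
    · exact hasDerivWithinAt_iff_hasFDerivWithinAt.2 <| .of_notMem_closure (by rwa [hC.closure_eq])
  have hderiv_compl : HasDerivWithinAt η (v t (η t)) Cᶜ t := by
    by_cases htC : t ∈ closure Cᶜ
    · have htT : t ∈ T := ht.resolve_left (by rwa [closure_compl] at htC)
      have hηt : η t = β t := by
        by_cases htC' : t ∈ C
        · rw [hηγ htC']
          exact heq ⟨frontier_eq_closure_inter_closure.ge ⟨subset_closure htC', htC⟩, htT⟩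
        · exact hηβ htC'
      rw [hηt]
      exact (hβ.isIntegralCurveAt (hT.mem_nhds htT)).hasDerivAt.hasDerivWithinAt.congr hηβ hηt
    · exact hasDerivWithinAt_iff_hasFDerivWithinAt.2 <| .of_notMem_closure htC
  exact (hderiv_C.union hderiv_compl).mono (by rw [union_compl_self]; exact subset_univ _)

variable [CompleteSpace E] {F : E → E} {U : Set E} {I : Set ℝ} {γ : ℝ → E}

lemma exists_isIntegralCurveOn_union_ball (hU : IsOpen U) (hIo : IsOpen I) (hIc : Convex ℝ I)
    (hγ : IsIntegralCurveOn γ (fun _ => F) (closure I)) (hγU : MapsTo γ (closure I) U)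
    {b : ℝ} (hb : b ∈ frontier I) (hF : ContDiffAt ℝ 1 F (γ b)) :
    ∃ r > 0, ∃ β : ℝ → E, IsIntegralCurveOn β (fun _ => F) (I ∪ ball b r) ∧
      MapsTo β (I ∪ ball b r) U ∧ EqOn β γ I := by
  classical
  obtain ⟨t₀, ht₀⟩ : I.Nonempty := closure_nonempty_iff.1 ⟨b, hb.1⟩
  have hγb : γ b ∈ U := hγU hb.1
  obtain ⟨α, hαb, ε, hε, hα⟩ :=
    hF.exists_forall_mem_closedBall_exists_eq_forall_mem_Ioo_hasDerivAt₀ b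
  rw [← Real.ball_eq_Ioo] at hα
  obtain ⟨δ, hδ, hαU⟩ : ∃ δ > 0, ball b δ ⊆ α ⁻¹' U :=
    Metric.mem_nhds_iff.1 <| (hα b (mem_ball_self hε)).continuousAt.preimage_mem_nhds <|
      hU.mem_nhds (hαb ▸ hγb)
  have ht₀b : 0 < dist t₀ b := dist_pos.2 fun h =>
    (hIo.frontier_eq ▸ hb).2 (h ▸ ht₀)
  set r := min (min ε δ) (dist t₀ b)
  have hfrontier : EqOn γ α (frontier (closure I) ∩ ball b r) := fun t ht => by
    have : t = b := frontier_inter_ball_subset_singleton hIc (hIo.interior_eq.symm ▸ ht₀) hb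
      ⟨frontier_closure_subset ht.1, ball_subset_ball (min_le_right _ _) ht.2⟩
    rw [this, hαb]
  have hαr : IsIntegralCurveOn α (fun _ => F) (ball b r) := fun t ht =>
    (hα t (ball_subset_ball ((min_le_left _ _).trans (min_le_left _ _)) ht)).hasDerivWithinAt
  refine ⟨r, by positivity, (closure I).piecewise γ α, ?_, fun t ht => ?_,
    (piecewise_eqOn _ γ α).mono subset_closure⟩
  · exact (isIntegralCurveOn_piecewise isClosed_closure isOpen_ball hγ hαr hfrontier).mono
      (union_subset_union_left _ hIo.subset_interior_closure)
  · by_cases htI : t ∈ closure I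
    · rw [piecewise_eq_of_mem _ _ _ htI]
      exact hγU htI
    · rw [piecewise_eq_of_notMem _ _ _ htI]
      exact hαU (ball_subset_ball ((min_le_left _ _).trans (min_le_right _ _))
        (ht.resolve_left fun h => htI (subset_closure h)))

/-- `γ` is a maximal integral curve, with values in `U`, of the autonomous vector field `F`: it is
defined on the open interval `I` (possibly empty, encoded as an open convex set) and has no
extension with values in `U` to a larger open interval. The values of `γ` outside `I` play no
role. -/
structure IsMaximalIntegralCurveOn (γ : ℝ → E) (F : E → E) (U : Set E) (I : Set ℝ) : Prop where
  isOpen : IsOpen I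
  convex : Convex ℝ I
  isIntegralCurveOn : IsIntegralCurveOn γ (fun _ => F) I
  mapsTo : MapsTo γ I U
  eq_of_extension : ∀ (J : Set ℝ) (β : ℝ → E), IsOpen J → Convex ℝ J → I ⊆ J →
    IsIntegralCurveOn β (fun _ => F) J → MapsTo β J U → EqOn β γ I → J = I

theorem IsMaximalIntegralCurveOn.eq_univ (h : IsMaximalIntegralCurveOn γ F U I)
    (hU : IsOpen U) (hF : ∀ p ∈ U, ContDiffAt ℝ 1 F p) (hne : I.Nonempty)
    (hclosure : closure (γ '' I) ⊆ U) {C : ℝ≥0} (hC : ∀ t ∈ I, ‖F (γ t)‖₊ ≤ C) :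
    I = univ := by
  have hlip : LipschitzOnWith C γ I :=
    h.convex.lipschitzOnWith_of_nnnorm_hasDerivWithin_le h.isIntegralCurveOn hC
  have hlim : ∀ t ∈ closure I, ∃ p, Tendsto γ (𝓝[I] t) (𝓝 p) :=
    fun t ht => exists_tendsto_of_uniformContinuousOn hlip.uniformContinuousOn ht
  have hmaps : MapsTo (extendFrom I γ) (closure I) U := fun t ht =>
    haveI : (𝓝[I] t).NeBot := mem_closure_iff_nhdsWithin_neBot.1 ht
    hclosure <| mem_closure_of_tendsto (tendsto_extendFrom (hlim t ht)) <|
      eventually_of_mem self_mem_nhdsWithin fun _ hs => mem_image_of_mem γ hs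
  have hcurve : IsIntegralCurveOn (extendFrom I γ) (fun _ => F) (closure I) :=
    isIntegralCurveOn_extendFrom_closure h.isOpen h.convex h.isIntegralCurveOn hlim
      fun t ht => ContinuousAt.comp (hF _ (hmaps ht)).continuousAt continuousAt_snd
  refine IsClopen.eq_univ (isClopen_iff_frontier_eq_empty.2 ?_) hne
  refine eq_empty_of_forall_notMem fun b hb => ?_
  obtain ⟨r, hr, β, hβ, hβU, hβγ⟩ :=
    exists_isIntegralCurveOn_union_ball hU h.isOpen h.convex hcurve hmaps hb (hF _ (hmaps hb.1))
  have hconvex : Convex ℝ (I ∪ ball b r) :=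
    (h.convex.isPreconnected.union' (inter_comm _ _ ▸ mem_closure_iff.1 hb.1 _ isOpen_ball
      (mem_ball_self hr)) (convex_ball b r).isPreconnected).convex
  have heq : I ∪ ball b r = I :=
    h.eq_of_extension _ β (h.isOpen.union isOpen_ball) hconvex subset_union_left hβ hβU
      (hβγ.trans (extendFrom_extends h.isIntegralCurveOn.continuousOn))
  exact (h.isOpen.frontier_eq ▸ hb).2 (heq ▸ Or.inr (mem_ball_self hr))

end IntegralCurve

section Kepler

variable {E : Type*} [NormedAddCommGroup E]

/-- The energy `|v|² + q/|x|` of the repulsive Kepler system at a point `(x, v)` of phase space,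
with the junk value `|v|²` at the singularity. -/
def keplerEnergy (q : ℝ) (p : E × E) : ℝ := ‖p.2‖ ^ 2 + q / ‖p.1‖

lemma keplerEnergy_pos {q : ℝ} (hq : 0 < q) {p : E × E} (hp : p.1 ≠ 0) :
    0 < keplerEnergy q p := by
  have := norm_pos_iff.2 hp
  unfold keplerEnergy
  positivity

lemma norm_snd_le_sqrt_keplerEnergy {q : ℝ} (hq : 0 ≤ q) (p : E × E) :
    ‖p.2‖ ≤ √(keplerEnergy q p) :=
  Real.le_sqrt_of_sq_le (le_add_of_nonneg_right (by positivity))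

lemma div_norm_fst_le_keplerEnergy (q : ℝ) (p : E × E) : q / ‖p.1‖ ≤ keplerEnergy q p :=
  le_add_of_nonneg_left (sq_nonneg _)

lemma div_keplerEnergy_le_norm_fst {q : ℝ} (hq : 0 < q) {p : E × E} (hp : p.1 ≠ 0) :
    q / keplerEnergy q p ≤ ‖p.1‖ :=
  (div_le_comm₀ (keplerEnergy_pos hq hp) (norm_pos_iff.2 hp)).2 (div_norm_fst_le_keplerEnergy q p)

section NormedSpace

variable [NormedSpace ℝ E]

/-- The vector field of the repulsive Kepler system on the phase space of pairs (position,
velocity). At the singularity `x = 0` it takes the junk value `(v, 0)`. -/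
def keplerField (q : ℝ) (p : E × E) : E × E := (p.2, (q / 2 / ‖p.1‖ ^ 3) • p.1)

lemma isIntegralCurveOn_keplerField_iff {q : ℝ} {I : Set ℝ} (hI : IsOpen I) {γ : ℝ → E × E} :
    IsIntegralCurveOn γ (fun _ => keplerField q) I ↔
      (∀ t ∈ I, HasDerivAt (fun t => (γ t).1) (γ t).2 t) ∧
        ∀ t ∈ I, HasDerivAt (fun t => (γ t).2) ((q / 2 / ‖(γ t).1‖ ^ 3) • (γ t).1) t := by
  have hderiv : IsIntegralCurveOn γ (fun _ => keplerField q) I ↔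
      ∀ t ∈ I, HasDerivAt γ (keplerField q (γ t)) t :=
    forall₂_congr fun t ht =>
      ⟨fun h => h.hasDerivAt (hI.mem_nhds ht), HasDerivAt.hasDerivWithinAt⟩
  rw [hderiv, ← forall₂_and]
  exact forall₂_congr fun t _ => ⟨fun h => ⟨h.fst, h.snd⟩, fun h => h.1.prodMk h.2⟩

lemma norm_keplerField_le {q : ℝ} (hq : 0 < q) {p : E × E} (hp : p.1 ≠ 0) :
    ‖keplerField q p‖ ≤ max (√(keplerEnergy q p)) (keplerEnergy q p ^ 2 / (2 * q)) := by
  have : 0 < ‖p.1‖ := norm_pos_iff.2 hp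
  refine max_le_max (norm_snd_le_sqrt_keplerEnergy hq.le p) ?_
  calc ‖(q / 2 / ‖p.1‖ ^ 3) • p.1‖
      = (q / ‖p.1‖) ^ 2 / (2 * q) := by
        rw [norm_smul, Real.norm_of_nonneg (by positivity)]
        field_simp
    _ ≤ keplerEnergy q p ^ 2 / (2 * q) := by
        gcongr
        exact div_norm_fst_le_keplerEnergy q p

end NormedSpace

variable [InnerProductSpace ℝ E]

lemma contDiffAt_keplerField (q : ℝ) {p : E × E} (hp : p.1 ≠ 0) {n : WithTop ℕ∞} :
    ContDiffAt ℝ n (keplerField q) p := by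
  have hnorm : ContDiffAt ℝ n (fun p : E × E => ‖p.1‖ ^ 3) p := (contDiffAt_fst.norm ℝ hp).pow 3
  have hne : ‖p.1‖ ^ 3 ≠ 0 := pow_ne_zero _ (norm_ne_zero_iff.2 hp)
  exact contDiffAt_snd.prodMk ((contDiffAt_const.div hnorm hne).smul contDiffAt_fst)

lemma hasDerivAt_norm {x : ℝ → E} {x' : E} {t : ℝ} (hx : HasDerivAt x x' t) (h0 : x t ≠ 0) :
    HasDerivAt (fun s => ‖x s‖) (⟪x t, x'⟫ / ‖x t‖) t := by
  have : 0 < ‖x t‖ := norm_pos_iff.2 h0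
  have hsqrt := hx.norm_sq.sqrt (by positivity)
  simp only [Real.sqrt_sq (norm_nonneg _)] at hsqrt
  convert! hsqrt using 1
  field_simp

lemma hasDerivAt_keplerEnergy {q : ℝ} {γ : ℝ → E × E} {t : ℝ}
    (hγ : HasDerivAt γ (keplerField q (γ t)) t) (h0 : (γ t).1 ≠ 0) :
    HasDerivAt (fun s => keplerEnergy q (γ s)) 0 t := by
  have hpos : 0 < ‖(γ t).1‖ := norm_pos_iff.2 h0
  have hkinetic : HasDerivAt (fun s => ‖(γ s).2‖ ^ 2)
      (2 * ⟪(γ t).2, (q / 2 / ‖(γ t).1‖ ^ 3) • (γ t).1⟫) t :=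
    HasDerivAt.norm_sq hγ.snd
  have hpotential : HasDerivAt (fun s => q / ‖(γ s).1‖)
      (-(q * (⟪(γ t).1, (γ t).2⟫ / ‖(γ t).1‖)) / ‖(γ t).1‖ ^ 2) t := by
    simpa using! (hasDerivAt_const t q).div (hasDerivAt_norm hγ.fst h0) hpos.ne'
  convert! hkinetic.add hpotential using 1
  rw [inner_smul_right, real_inner_comm]
  field_simp
  ring

lemma keplerEnergy_eq {q : ℝ} {γ : ℝ → E × E} {I : Set ℝ} (hIo : IsOpen I)
    (hIc : IsPreconnected I) (hγ : IsIntegralCurveOn γ (fun _ => keplerField q) I)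
    (h0 : ∀ t ∈ I, (γ t).1 ≠ 0) {s t : ℝ} (hs : s ∈ I) (ht : t ∈ I) :
    keplerEnergy q (γ s) = keplerEnergy q (γ t) := by
  have hderiv : ∀ r ∈ I, HasDerivAt (fun r => keplerEnergy q (γ r)) 0 r := fun r hr =>
    hasDerivAt_keplerEnergy ((hγ r hr).hasDerivAt (hIo.mem_nhds hr)) (h0 r hr)
  exact hIo.is_const_of_deriv_eq_zero hIc
    (fun r hr => (hderiv r hr).differentiableAt.differentiableWithinAt)
    (fun r hr => (hderiv r hr).deriv) hs ht

theorem IsMaximalIntegralCurveOn.eq_univ_of_keplerField [CompleteSpace E] {q : ℝ} (hq : 0 < q)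
    {γ : ℝ → E × E} {I : Set ℝ}
    (h : IsMaximalIntegralCurveOn γ (keplerField q) {p | p.1 ≠ 0} I) (hne : I.Nonempty) :
    I = univ := by
  obtain ⟨t₀, ht₀⟩ := hne
  have henergy : ∀ t ∈ I, keplerEnergy q (γ t) = keplerEnergy q (γ t₀) := fun t ht =>
    keplerEnergy_eq h.isOpen h.convex.isPreconnected h.isIntegralCurveOn h.mapsTo ht ht₀
  set H := keplerEnergy q (γ t₀)
  have hclosure : closure (γ '' I) ⊆ {p | q / H ≤ ‖p.1‖} := by
    refine closure_minimal (image_subset_iff.2 fun t ht => ?_)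
      (isClosed_le continuous_const continuous_fst.norm)
    exact henergy t ht ▸ div_keplerEnergy_le_norm_fst hq (h.mapsTo ht)
  have hHpos : 0 < q / H := div_pos hq (keplerEnergy_pos hq (h.mapsTo ht₀))
  refine h.eq_univ (C := (max (√H) (H ^ 2 / (2 * q))).toNNReal)
    (isOpen_ne.preimage continuous_fst) (fun p hp => contDiffAt_keplerField q hp) ⟨t₀, ht₀⟩
    (hclosure.trans fun p hp => norm_pos_iff.1 (hHpos.trans_le hp)) fun t ht => ?_
  rw [← norm_toNNReal]
  exact Real.toNNReal_le_toNNReal (henergy t ht ▸ norm_keplerField_le hq (h.mapsTo ht))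

theorem kepler_global_existence_and_bounds_general [CompleteSpace E] (q : ℝ) (hq : 0 < q)
    (I : Set ℝ) (hIopen : IsOpen I) (hIconv : Convex ℝ I)
    (t₀ : ℝ) (ht₀ : t₀ ∈ I) (x v : ℝ → E)
    (hx0 : ∀ t ∈ I, x t ≠ 0)
    (hx : ∀ t ∈ I, HasDerivAt x (v t) t)
    (hv : ∀ t ∈ I, HasDerivAt v ((q / 2 / ‖x t‖ ^ 3) • x t) t)
    (hmax : ∀ (J : Set ℝ) (y w : ℝ → E), IsOpen J → Convex ℝ J → I ⊆ J →
      (∀ t ∈ J, y t ≠ 0) →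
      (∀ t ∈ J, HasDerivAt y (w t) t) →
      (∀ t ∈ J, HasDerivAt w ((q / 2 / ‖y t‖ ^ 3) • y t) t) →
      (∀ t ∈ I, y t = x t ∧ w t = v t) → J = I) :
    I = univ ∧
      ∀ t ∈ I,
        q / (‖v t₀‖ ^ 2 + q / ‖x t₀‖) ≤ ‖x t‖ ∧
        ‖v t‖ ≤ √(‖v t₀‖ ^ 2 + q / ‖x t₀‖) := by
  have hcurve : IsIntegralCurveOn (fun t => (x t, v t)) (fun _ => keplerField q) I :=
    (isIntegralCurveOn_keplerField_iff hIopen).2 ⟨hx, hv⟩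
  have hmaximal :
      IsMaximalIntegralCurveOn (fun t => (x t, v t)) (keplerField q) {p | p.1 ≠ 0} I := by
    refine ⟨hIopen, hIconv, hcurve, hx0, fun J β hJ hJc hIJ hβ hβ0 heq => ?_⟩
    obtain ⟨hy, hw⟩ := (isIntegralCurveOn_keplerField_iff hJ).1 hβ
    exact hmax J _ _ hJ hJc hIJ hβ0 hy hw fun t ht => Prod.ext_iff.1 (heq ht)
  refine ⟨hmaximal.eq_univ_of_keplerField hq ⟨t₀, ht₀⟩, fun t ht => ?_⟩
  have henergy : keplerEnergy q (x t, v t) = ‖v t₀‖ ^ 2 + q / ‖x t₀‖ :=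
    keplerEnergy_eq hIopen hIconv.isPreconnected hcurve hx0 ht ht₀
  rw [← henergy]
  exact ⟨div_keplerEnergy_le_norm_fst (p := (x t, v t)) hq (hx0 t ht),
    norm_snd_le_sqrt_keplerEnergy hq.le (x t, v t)⟩

end Kepler

/-- Any maximal `C¹` solution of the repulsive Kepler ODE `x' = v`, `v' = (q/2)·x/|x|³`
(on an open interval `I ∋ t₀`, not extendable to any strictly larger open interval)
is global, i.e. `I = ℝ`, and along it `|x(t)| ≥ q/H` and `|v(t)| ≤ √H`, where
`H = |v(t₀)|² + q/|x(t₀)|` is the conserved energy. -/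
theorem kepler_global_existence_and_bounds (q : ℝ) (hq : 0 < q)
    (I : Set ℝ) (hIopen : IsOpen I) (hIconv : Convex ℝ I)
    (t₀ : ℝ) (ht₀ : t₀ ∈ I) (x v : ℝ → R3)
    (hx0 : ∀ t ∈ I, x t ≠ 0)
    (hx : ∀ t ∈ I, HasDerivAt x (v t) t)
    (hv : ∀ t ∈ I, HasDerivAt v ((q / 2 / ‖x t‖ ^ 3) • x t) t)
    (hmax : ∀ (J : Set ℝ) (y w : ℝ → R3), IsOpen J → Convex ℝ J → I ⊆ J →
      (∀ t ∈ J, y t ≠ 0) →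
      (∀ t ∈ J, HasDerivAt y (w t) t) →
      (∀ t ∈ J, HasDerivAt w ((q / 2 / ‖y t‖ ^ 3) • y t) t) →
      (∀ t ∈ I, y t = x t ∧ w t = v t) → J = I) :
    I = Set.univ ∧
      ∀ t ∈ I,
        q / (‖v t₀‖ ^ 2 + q / ‖x t₀‖) ≤ ‖x t‖ ∧
        ‖v t‖ ≤ Real.sqrt (‖v t₀‖ ^ 2 + q / ‖x t₀‖) := by
  exact kepler_global_existence_and_bounds_general q hq I hIopen hIconv t₀ ht₀ x v hx0 hx hv hmax
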